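/- The total number of sibling portraits (allowing polygons mapping with any degree) of an n-gon inside a round gap of degree i equals the number of one-to-one sibling portraits of an (n+1)-gon in a round gap of degree i; that is, F(i,n) = f(i,n+1) = binomial((n+1)·i, i)/(n·i + 1). -/

import Mathlib

/-- Cyclic displacement (number of steps counterclockwise) from `a` to `x` among
`m` marked points on the circle. -/
def arcPos {m : ℕ} (a x : Fin m) : ℕ := (x.val + m - a.val) % m

/-- `t` lies strictly between `p` and `q` in counterclockwise cyclic order. -/
def CycBtw {m : ℕ} (p t q : Fin m) : Prop := 0 < arcPos p t ∧ arcPos p t < arcPos p q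

/-- `q` is the next vertex of `S` counterclockwise after `p`. -/
def IsNext {m : ℕ} (S : Finset (Fin m)) (p q : Fin m) : Prop :=
  p ∈ S ∧ q ∈ S ∧ p ≠ q ∧ ∀ r ∈ S, ¬ CycBtw p r q

/-- The label of a marked point: the points are cyclically labeled by repetitions
of the word `x_0 x_1 … x_{n-1}`. -/
def label (n : ℕ) {m : ℕ} (p : Fin m) : ZMod n := (p.val : ZMod n)

/-- `S` is a polygon visiting the labels in positive (counterclockwise) cyclic
order, i.e. its boundary maps forward as a positively oriented covering of the
boundary of the `n`-gon. -/
def IsPosPolygon (n : ℕ) {m : ℕ} (S : Finset (Fin m)) : Prop :=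
  2 ≤ S.card ∧ n ∣ S.card ∧ ∀ p q, IsNext S p q → label n q = label n p + 1

/-- Two vertex sets cross (link) on the circle. -/
def Crosses {m : ℕ} (S T : Finset (Fin m)) : Prop :=
  ∃ p ∈ S, ∃ q ∈ S, ∃ r ∈ T, ∃ s ∈ T, CycBtw p r q ∧ CycBtw q s p

/-- A sibling portrait of the `n`-gon in a round gap of degree `D`: a collection of
pairwise disjoint, non-crossing, positively oriented polygons using all `D*n`
preimage points (so that together `D` sides map to each side of the `n`-gon). -/
def IsPortrait (D n : ℕ) (PP : Finset (Finset (Fin (D * n)))) : Prop :=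
  (∀ S ∈ PP, IsPosPolygon n S) ∧
  (∀ S ∈ PP, ∀ T ∈ PP, S ≠ T → Disjoint S T ∧ ¬ Crosses S T) ∧
  (∀ p : Fin (D * n), ∃ S ∈ PP, p ∈ S)

/-!
The label condition on the polygons of a portrait is automatic. The points strictly between two
consecutive vertices of a polygon form a union of polygons of the portrait, so their number is a
multiple of `n` and the label advances by one. Portraits are therefore the noncrossing partitions
of `i * n` points into blocks of size divisible by `n`, and the one-to-one portraits are those with
all blocks of size `n`.

Recording the size of each block at its first point, and `0` at all other points and at one further
point, turns the noncrossing partitions of `m` points into the ballot sequences of length `m + 1`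
and sum `m`. By the cycle lemma each sequence of length `m + 1` and sum `m` has exactly one ballot
rotation, so `m + 1` times the number of noncrossing partitions with block sizes in a given set is
the number of all sequences of sum `m` with entries in that set or zero. For multiples of `n` this
is a stars-and-bars count, and for entries in `{0, n + 1}` a binomial coefficient.
-/

open Finset

section NoncrossingPartition

variable {α : Type*} [LinearOrder α] [Fintype α]

/-- A partition of a finite linear order is noncrossing if no two distinct blocks interleave as
`a < b < c < d` with `a, c` in one block and `b, d` in the other. -/
def IsNoncrossing (P : Finpartition (univ : Finset α)) : Prop :=
  ∀ ⦃a b c d : α⦄, a < b → b < c → c < d →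
    P.part a = P.part c → P.part b = P.part d → P.part a = P.part b

/-- The first element of the block of `x`. -/
def blockMin (P : Finpartition (univ : Finset α)) (x : α) : α :=
  (P.part x).min' ⟨x, P.mem_part (mem_univ x)⟩

/-- The maps of the form `blockMin P` with `P` noncrossing: they retract every element onto the
first element of its block. -/
structure IsNoncrossingRetraction (μ : α → α) : Prop where
  le : ∀ x, μ x ≤ x
  idem : ∀ x, μ (μ x) = μ x
  noncrossing : ∀ ⦃x z⦄, μ x < μ z → μ z < x → ¬ x < z

open Classical in
/-- The partition into the fibres of `μ`. -/
noncomputable def fiberPartition (μ : α → α) : Finpartition (univ : Finset α) :=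
  Finpartition.ofSetoid (Setoid.ker μ)

theorem part_blockMin (P : Finpartition (univ : Finset α)) (x : α) :
    P.part (blockMin P x) = P.part x :=
  P.part_eq_of_mem (P.part_mem.2 (mem_univ x)) (min'_mem _ _)

theorem blockMin_le_of_part_eq {P : Finpartition (univ : Finset α)} {x y : α}
    (h : P.part x = P.part y) : blockMin P x ≤ y :=
  min'_le _ _ (h ▸ P.mem_part (mem_univ y))

theorem blockMin_eq_blockMin_iff {P : Finpartition (univ : Finset α)} {x y : α} :
    blockMin P x = blockMin P y ↔ P.part x = P.part y :=
  ⟨fun h => by rw [← part_blockMin P x, h, part_blockMin], fun h => by simp only [blockMin, h]⟩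

theorem IsNoncrossing.isNoncrossingRetraction_blockMin {P : Finpartition (univ : Finset α)}
    (hP : IsNoncrossing P) : IsNoncrossingRetraction (blockMin P) where
  le _ := blockMin_le_of_part_eq rfl
  idem x := blockMin_eq_blockMin_iff.2 (part_blockMin P x)
  noncrossing x z hlt hzx hxz := by
    have same_block := hP hlt hzx hxz (part_blockMin P x) (part_blockMin P z)
    rw [part_blockMin, part_blockMin, ← blockMin_eq_blockMin_iff] at same_block
    exact hlt.ne same_block

theorem part_fiberPartition_eq_iff {μ : α → α} {x y : α} :
    (fiberPartition μ).part x = (fiberPartition μ).part y ↔ μ x = μ y := by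
  classical
  rw [← Finpartition.mem_part_iff_part_eq_part _ (mem_univ x) (mem_univ y), fiberPartition,
    Finpartition.mem_part_ofSetoid_iff_rel, Setoid.ker_def, eq_comm]

theorem IsNoncrossingRetraction.isNoncrossing_fiberPartition {μ : α → α}
    (hμ : IsNoncrossingRetraction μ) : IsNoncrossing (fiberPartition μ) := by
  intro a b c d hab hbc hcd hac hbd
  rw [part_fiberPartition_eq_iff] at hac hbd ⊢
  by_contra hne
  rcases lt_or_gt_of_ne hne with hlt | hgt
  · exact hμ.noncrossing (hac ▸ hbd ▸ hlt) (hbd ▸ (hμ.le b).trans_lt hbc) hcd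
  · exact hμ.noncrossing (hac ▸ hgt) (hac ▸ (hμ.le a).trans_lt hab) hbc

theorem IsNoncrossingRetraction.blockMin_fiberPartition {μ : α → α}
    (hμ : IsNoncrossingRetraction μ) : blockMin (fiberPartition μ) = μ := by
  funext x
  refine le_antisymm (blockMin_le_of_part_eq (part_fiberPartition_eq_iff.2 (hμ.idem x).symm)) ?_
  rw [← part_fiberPartition_eq_iff.1 (part_blockMin (fiberPartition μ) x)]
  exact hμ.le _

theorem blockMin_injective :
    Function.Injective (blockMin : Finpartition (univ : Finset α) → α → α) := by
  intro P Q h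
  have part_eq : P.part = Q.part := by
    funext x
    ext y
    rw [P.mem_part_iff_part_eq_part (mem_univ y) (mem_univ x),
      Q.mem_part_iff_part_eq_part (mem_univ y) (mem_univ x), ← blockMin_eq_blockMin_iff, h,
      blockMin_eq_blockMin_iff]
  have mem_parts (R : Finpartition (univ : Finset α)) (S : Finset α) :
      S ∈ R.parts ↔ ∃ x, R.part x = S :=
    ⟨fun hS => (R.part_surjOn hS).imp fun _ => And.right,
      fun ⟨x, hx⟩ => hx ▸ R.part_mem.2 (mem_univ x)⟩
  ext S
  rw [mem_parts, mem_parts, part_eq]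

theorem forall_parts_card_iff {A : ℕ → Prop} (hA : A 0) (P : Finpartition (univ : Finset α)) :
    (∀ S ∈ P.parts, A #S) ↔ ∀ y, A #{x | blockMin P x = y} := by
  have fiber_eq (x : α) : ({y | blockMin P y = blockMin P x} : Finset α) = P.part x := by
    ext y
    rw [mem_filter_univ, blockMin_eq_blockMin_iff,
      P.mem_part_iff_part_eq_part (mem_univ y) (mem_univ x)]
  constructor
  · intro h y
    by_cases hy : ∃ x, blockMin P x = y
    · obtain ⟨x, rfl⟩ := hy
      rw [fiber_eq]
      exact h _ (P.part_mem.2 (mem_univ x))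
    · rw [filter_eq_empty_iff.2 fun x _ hx => hy ⟨x, hx⟩]
      exact hA
  · intro h S hS
    obtain ⟨x, -, rfl⟩ := P.part_surjOn hS
    rw [← fiber_eq]
    exact h _

theorem card_noncrossing_eq_card_retraction {A : ℕ → Prop} (hA : A 0) :
    Nat.card {P : Finpartition (univ : Finset α) // IsNoncrossing P ∧ ∀ S ∈ P.parts, A #S} =
      Nat.card {μ : α → α // IsNoncrossingRetraction μ ∧ ∀ y, A #{x | μ x = y}} := by
  refine Nat.card_eq_of_bijective (fun P => ⟨blockMin P.1,
    P.2.1.isNoncrossingRetraction_blockMin, (forall_parts_card_iff hA _).1 P.2.2⟩) ⟨?_, ?_⟩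
  · exact fun P Q h => Subtype.ext (blockMin_injective (congrArg Subtype.val h))
  · rintro ⟨μ, hμ, hAμ⟩
    refine ⟨⟨fiberPartition μ, hμ.isNoncrossing_fiberPartition, ?_⟩,
      Subtype.ext hμ.blockMin_fiberPartition⟩
    rwa [forall_parts_card_iff hA, hμ.blockMin_fiberPartition]

end NoncrossingPartition

section Height

open scoped Fin.CommRing

variable {m : ℕ}

/-- The height after `j` steps of the lattice path whose step at time `w` is `a w - 1`, where `a` is
extended to all of `ℕ` with period `m + 1` (this is what the cast `ℕ → Fin (m + 1)` does). -/
def height (a : Fin (m + 1) → ℕ) (j : ℕ) : ℤ :=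
  ∑ w ∈ range j, (a w : ℤ) - j

/-- A ballot sequence: a sequence of length `m + 1` and sum `m` whose path stays nonnegative
until its final step, which leads from height `0` to height `-1`. -/
structure IsBallot (a : Fin (m + 1) → ℕ) : Prop where
  sum_eq : ∑ w, a w = m
  height_nonneg : ∀ j ≤ m, 0 ≤ height a j

theorem height_zero (a : Fin (m + 1) → ℕ) : height a 0 = 0 := by
  simp [height]

theorem height_succ (a : Fin (m + 1) → ℕ) (j : ℕ) :
    height a (j + 1) = height a j + a j - 1 := by
  rw [height, height, sum_range_succ]
  push_cast
  ring

theorem height_sub_height (a : Fin (m + 1) → ℕ) {j k : ℕ} (hjk : j ≤ k) :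
    height a k - height a j = (∑ w ∈ Ico j k, a w : ℕ) - (k - j : ℕ) := by
  rw [height, height, Nat.cast_sum, sum_Ico_eq_sub _ hjk, Nat.cast_sub hjk]
  ring

theorem height_period {a : Fin (m + 1) → ℕ} (ha : ∑ w, a w = m) : height a (m + 1) = -1 := by
  have sum_eq : ∑ w ∈ range (m + 1), (a w : ℤ) = m := by
    rw [← Fin.sum_univ_eq_sum_range fun w => (a w : ℤ)]
    simp only [Fin.cast_val_eq_self]
    exact_mod_cast ha
  rw [height, sum_eq]
  push_cast
  ring

theorem height_add (a : Fin (m + 1) → ℕ) (k : Fin (m + 1)) (j : ℕ) :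
    height a (k + j) = height a k + height (fun w => a (w + k)) j := by
  induction j with
  | zero => simp [height_zero]
  | succ j ih =>
    have index_eq : ((k + j : ℕ) : Fin (m + 1)) = (j : Fin (m + 1)) + k := by
      rw [Nat.cast_add, Fin.cast_val_eq_self]
      exact add_comm k _
    rw [← add_assoc, height_succ, height_succ, ih, index_eq]
    ring

theorem height_add_period {a : Fin (m + 1) → ℕ} (ha : ∑ w, a w = m) (j : ℕ) :
    height a (j + (m + 1)) = height a j - 1 := by
  induction j with
  | zero => rw [zero_add, height_period ha, height_zero, zero_sub]
  | succ j ih =>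
    have index_eq : ((j + (m + 1) : ℕ) : Fin (m + 1)) = j := by
      rw [Nat.cast_add, Fin.natCast_self, add_zero]
    rw [add_right_comm, height_succ, height_succ, ih, index_eq]
    ring

end Height

section CycleLemma

variable {m : ℕ}

theorem sum_rotate (a : Fin (m + 1) → ℕ) (k : Fin (m + 1)) : ∑ w, a (w + k) = ∑ w, a w :=
  Equiv.sum_comp (Equiv.addRight k) a

theorem isBallot_rotate_iff {a : Fin (m + 1) → ℕ} (ha : ∑ w, a w = m) (k : Fin (m + 1)) :
    IsBallot (fun w => a (w + k)) ↔ ∀ j ≤ m, height a k ≤ height a (k + j) := by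
  simp only [height_add, le_add_iff_nonneg_right]
  exact ⟨IsBallot.height_nonneg, fun h => ⟨(sum_rotate a k).trans ha, h⟩⟩

-- The rotation must start where the path first attains its minimum over one period.
theorem exists_isBallot_rotate {a : Fin (m + 1) → ℕ} (ha : ∑ w, a w = m) :
    ∃ k : Fin (m + 1), IsBallot (fun w => a (w + k)) := by
  obtain ⟨k₀, -, hk₀⟩ := exists_min_image univ (fun k : Fin (m + 1) => height a k) univ_nonempty
  set minimizers : Finset (Fin (m + 1)) := {k | height a k ≤ height a k₀}
  obtain ⟨k, hk, hfirst⟩ := exists_min_image minimizers id ⟨k₀, by simp [minimizers]⟩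
  have hmin (j : Fin (m + 1)) : height a k ≤ height a j :=
    ((mem_filter_univ k).1 hk).trans (hk₀ j (mem_univ j))
  refine ⟨k, (isBallot_rotate_iff ha k).2 fun j hj => ?_⟩
  by_cases hkj : (k : ℕ) + j < m + 1
  · exact hmin ⟨k + j, hkj⟩
  · obtain ⟨l, hl⟩ := Nat.exists_eq_add_of_le' (not_lt.1 hkj)
    have hlk : l < k := by omega
    have hlt : height a k < height a l := by
      by_contra! hle
      have hmem : (⟨l, by omega⟩ : Fin (m + 1)) ∈ minimizers :=
        (mem_filter_univ _).2 (hle.trans ((mem_filter_univ k).1 hk))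
      exact hlk.not_ge (hfirst _ hmem)
    rw [hl, height_add_period ha]
    omega

theorem isBallot_rotate_unique {a : Fin (m + 1) → ℕ} (ha : ∑ w, a w = m) {k l : Fin (m + 1)}
    (hk : IsBallot (fun w => a (w + k))) (hl : IsBallot (fun w => a (w + l))) : k = l := by
  rw [isBallot_rotate_iff ha] at hk hl
  wlog hkl : k < l generalizing k l
  · rcases eq_or_lt_of_not_gt hkl with h | h
    · exact h.symm
    · exact (this hl hk h).symm
  have hlt : (k : ℕ) < l := hkl
  have up : height a k ≤ height a l := by simpa [hlt.le] using hk (l - k) (by omega)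
  have down : height a l ≤ height a k - 1 := by
    rw [← height_add_period ha]
    convert hl (k + (m + 1) - l) (by omega) using 2
    omega
  omega

theorem succ_mul_card_isBallot (A : ℕ → Prop) :
    (m + 1) * Nat.card {b : Fin (m + 1) → ℕ // IsBallot b ∧ ∀ w, A (b w)} =
      Nat.card {a : Fin (m + 1) → ℕ // ∑ w, a w = m ∧ ∀ w, A (a w)} := by
  nth_rw 1 [← Nat.card_fin (m + 1), ← Nat.card_prod]
  refine Nat.card_eq_of_bijective (fun p => ⟨fun w => p.2.1 (w - p.1), ?_, ?_⟩) ⟨?_, ?_⟩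
  · simpa only [sub_eq_add_neg, sum_rotate] using p.2.2.1.sum_eq
  · exact fun w => p.2.2.2 _
  · rintro ⟨k, b, hb, hAb⟩ ⟨l, c, hc, hAc⟩ h
    have heq : (fun w => b (w - k)) = fun w => c (w - l) := congrArg Subtype.val h
    have hkb : (fun w => b (w + k - k)) = b := by simp only [add_sub_cancel_right]
    have hlc : (fun w => b (w + l - k)) = c := by
      funext w
      simpa using congrFun heq (w + l)
    have hsum : ∑ w, b (w - k) = m := by
      simpa only [sub_eq_add_neg, sum_rotate] using hb.sum_eq
    obtain rfl : k = l :=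
      isBallot_rotate_unique hsum (hkb.symm ▸ hb) (hlc.symm ▸ hc)
    obtain rfl : b = c := hkb.symm.trans hlc
    rfl
  · rintro ⟨a, ha, hAa⟩
    obtain ⟨k, hk⟩ := exists_isBallot_rotate ha
    exact ⟨⟨k, fun w => a (w + k), hk, fun w => hAa _⟩, by simp⟩

end CycleLemma

section FiberCard

open scoped Fin.CommRing

variable {m : ℕ} {μ : Fin m → Fin m}

/-- The sequence of the fibre cardinalities of `μ`, padded with a final `0`. -/
def fiberCard (μ : Fin m → Fin m) (y : Fin (m + 1)) : ℕ :=
  #{x | (μ x).castSucc = y}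

/-- The points `y ≤ x` such that the numbers `a y, …, a x` add up to at least the number of points
of the interval `[y, x]`. If `a` is the sequence of block sizes of a noncrossing partition, recorded
at the first elements of the blocks, then the greatest such `y` is the start of the block of `x`. -/
def sufficientStarts (a : Fin (m + 1) → ℕ) (x : Fin m) : Set (Fin m) :=
  {y | y ≤ x ∧ height a y ≤ height a (x + 1)}

theorem fiberCard_castSucc (μ : Fin m → Fin m) (y : Fin m) :
    fiberCard μ y.castSucc = #{x | μ x = y} := by
  simp only [fiberCard, Fin.castSucc_inj]

theorem fiberCard_last (μ : Fin m → Fin m) : fiberCard μ (Fin.last m) = 0 := by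
  simp [fiberCard, Fin.castSucc_ne_last]

theorem sum_fiberCard (μ : Fin m → Fin m) : ∑ y, fiberCard μ y = m := by
  unfold fiberCard
  rw [← card_eq_sum_card_fiberwise fun _ _ => mem_univ _, card_univ, Fintype.card_fin]

theorem sum_Ico_fiberCard (μ : Fin m → Fin m) {j k : ℕ} (hk : k ≤ m) :
    ∑ w ∈ Ico j k, fiberCard μ w = #{x | j ≤ (μ x : ℕ) ∧ (μ x : ℕ) < k} := by
  have maps_to : Set.MapsTo (fun x => (μ x : ℕ))
      ({x | j ≤ (μ x : ℕ) ∧ (μ x : ℕ) < k} : Finset (Fin m)) (Ico j k) := by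
    intro x hx
    simpa using hx
  rw [card_eq_sum_card_fiberwise maps_to]
  refine sum_congr rfl fun w hw => ?_
  obtain ⟨hjw, hwk⟩ := mem_Ico.1 hw
  have cast_eq : (w : Fin (m + 1)) = (⟨w, by omega⟩ : Fin m).castSucc :=
    Fin.ext (Nat.mod_eq_of_lt (by omega))
  rw [cast_eq, fiberCard_castSucc, filter_filter]
  refine congrArg card (filter_congr fun x _ => ?_)
  rw [Fin.ext_iff]
  dsimp only
  omega

theorem card_filter_fin_Ico {j k : ℕ} (hk : k ≤ m) :
    #{x : Fin m | j ≤ (x : ℕ) ∧ (x : ℕ) < k} = k - j := by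
  rw [← card_map Fin.valEmbedding, ← Nat.card_Ico]
  congr 1
  ext w
  simp only [mem_map, mem_filter_univ, Fin.valEmbedding_apply, mem_Ico]
  exact ⟨fun ⟨_, hx, hxw⟩ => hxw ▸ hx, fun hw => ⟨⟨w, hw.2.trans_le hk⟩, hw, rfl⟩⟩

theorem height_fiberCard_sub (μ : Fin m → Fin m) {j k : ℕ} (hjk : j ≤ k) (hk : k ≤ m) :
    height (fiberCard μ) k - height (fiberCard μ) j =
      #{x | j ≤ (μ x : ℕ) ∧ (μ x : ℕ) < k} - #{x : Fin m | j ≤ (x : ℕ) ∧ (x : ℕ) < k} := by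
  rw [height_sub_height _ hjk, sum_Ico_fiberCard μ hk, card_filter_fin_Ico hk]

namespace IsNoncrossingRetraction

theorem isBallot_fiberCard (hμ : IsNoncrossingRetraction μ) : IsBallot (fiberCard μ) where
  sum_eq := sum_fiberCard μ
  height_nonneg j hj := by
    have card_le : #{x : Fin m | 0 ≤ (x : ℕ) ∧ (x : ℕ) < j} ≤
        #{x | 0 ≤ (μ x : ℕ) ∧ (μ x : ℕ) < j} :=
      card_le_card <| monotone_filter_right _ fun x _ hx =>
        ⟨zero_le, (Fin.le_def.1 (hμ.le x)).trans_lt hx.2⟩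
    have := height_fiberCard_sub μ (Nat.zero_le j) hj
    rw [height_zero] at this
    omega

theorem isGreatest_sufficientStarts (hμ : IsNoncrossingRetraction μ) (x : Fin m) :
    IsGreatest (sufficientStarts (fiberCard μ) x) (μ x) := by
  have hμx : μ x ≤ x := hμ.le x
  refine ⟨⟨hμx, ?_⟩, fun y ⟨hyx, hy⟩ => ?_⟩
  · have card_le : #{z : Fin m | (μ x : ℕ) ≤ z ∧ (z : ℕ) < x + 1} ≤
        #{z : Fin m | (μ x : ℕ) ≤ μ z ∧ (μ z : ℕ) < x + 1} := by
      refine card_le_card <| monotone_filter_right _ fun z _ hz => ?_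
      have hμz := hμ.le z
      have hidem := hμ.idem x
      have hnc := @hμ.noncrossing z x
      grind
    have := height_fiberCard_sub μ (j := μ x) (k := x + 1) (by omega) (by omega)
    omega
  · by_contra! hlt
    have card_lt : #{z : Fin m | (y : ℕ) ≤ μ z ∧ (μ z : ℕ) < x + 1} <
        #{z : Fin m | (y : ℕ) ≤ z ∧ (z : ℕ) < x + 1} := by
      refine card_lt_card <| (ssubset_iff_of_subset ?_).2 ⟨x, ?_, ?_⟩
      · refine monotone_filter_right _ fun z _ hz => ?_
        have hμz := hμ.le z
        have hidem := hμ.idem z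
        have hnc := @hμ.noncrossing x z
        grind
      · exact (mem_filter_univ x).2 ⟨hyx, Nat.lt_succ_self _⟩
      · exact fun hx => hlt.not_ge ((mem_filter_univ x).1 hx).1
    have := height_fiberCard_sub μ (j := y) (k := x + 1) (by omega) (by omega)
    omega

end IsNoncrossingRetraction

theorem height_lt_of_isGreatest {a : Fin (m + 1) → ℕ}
    (hμ : ∀ x, IsGreatest (sufficientStarts a x) (μ x)) {x : Fin m} {j : ℕ}
    (hj : (μ x : ℕ) < j) (hjx : j ≤ x) : height a (x + 1) < height a j := by
  by_contra! hle
  exact hj.not_ge ((hμ x).2 (show (⟨j, by omega⟩ : Fin m) ∈ _ from ⟨hjx, hle⟩))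

theorem isNoncrossingRetraction_of_isGreatest {a : Fin (m + 1) → ℕ}
    (hμ : ∀ x, IsGreatest (sufficientStarts a x) (μ x)) : IsNoncrossingRetraction μ where
  le x := (hμ x).1.1
  idem x := by
    have hle : μ x ≤ x := (hμ x).1.1
    have hstart : height a (μ x) ≤ height a (x + 1) := (hμ x).1.2
    rcases hle.eq_or_lt with heq | hlt
    · rw [heq, heq]
    · have hdrop := height_lt_of_isGreatest hμ (j := μ x + 1) (Nat.lt_succ_self _) hlt
      exact le_antisymm (hμ (μ x)).1.1 ((hμ (μ x)).2 ⟨le_rfl, (hstart.trans_lt hdrop).le⟩)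
  noncrossing x z hlt hzx hxz := by
    have hx := height_lt_of_isGreatest hμ hlt hzx.le
    have hz := height_lt_of_isGreatest hμ (j := x + 1) (Nat.lt_succ_of_lt hzx) hxz
    exact lt_irrefl _ (((hμ z).1.2.trans_lt hz).trans hx)

-- `x ↦ height a (x + 1)` is strictly decreasing on the fibre over `y`, with values in
-- `[height a y, height a y + a y)`.
theorem fiberCard_castSucc_le_of_isGreatest {a : Fin (m + 1) → ℕ}
    (hμ : ∀ x, IsGreatest (sufficientStarts a x) (μ x)) (y : Fin m) :
    fiberCard μ y.castSucc ≤ a y.castSucc := by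
  rw [fiberCard_castSucc, ← Int.toNat_natCast (a y.castSucc),
    ← add_sub_cancel_left (height a y) (a y.castSucc : ℤ), ← Int.card_Ico]
  refine card_le_card_of_injOn (fun x => height a (x + 1)) (fun x hx => ?_) ?_
  · obtain rfl : μ x = y := (mem_filter_univ x).1 hx
    have height_le : height a (x + 1) ≤ height a (μ x + 1) := by
      rcases (hμ x).1.1.eq_or_lt with heq | hlt
      · rw [heq]
      · exact (height_lt_of_isGreatest hμ (Nat.lt_succ_self _) hlt).le
    rw [height_succ a (μ x), Fin.coe_eq_castSucc] at height_le
    exact mem_Ico.2 ⟨(hμ x).1.2, by dsimp only; omega⟩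
  · refine StrictAntiOn.injOn fun x hx z hz hxz => ?_
    have same_fiber : μ z = μ x := ((mem_filter_univ z).1 hz).trans ((mem_filter_univ x).1 hx).symm
    have hx_le : μ x ≤ x := (hμ x).1.1
    exact height_lt_of_isGreatest hμ (by omega) hxz

theorem fiberCard_eq_of_isGreatest {a : Fin (m + 1) → ℕ}
    (hμ : ∀ x, IsGreatest (sufficientStarts a x) (μ x)) (ha : ∑ w, a w = m) : fiberCard μ = a := by
  have hle (y : Fin (m + 1)) : fiberCard μ y ≤ a y := by
    induction y using Fin.lastCases with
    | last => simp [fiberCard_last]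
    | cast y => exact fiberCard_castSucc_le_of_isGreatest hμ y
  funext y
  exact (sum_eq_sum_iff_of_le fun y _ => hle y).1 ((sum_fiberCard μ).trans ha.symm) y (mem_univ y)

theorem IsBallot.exists_isGreatest {a : Fin (m + 1) → ℕ} (ha : IsBallot a) (x : Fin m) :
    ∃ y, IsGreatest (sufficientStarts a x) y := by
  have hfirst : (⟨0, x.pos⟩ : Fin m) ∈ sufficientStarts a x :=
    ⟨Nat.zero_le _, (height_zero a).trans_le (ha.height_nonneg _ x.2)⟩
  exact (Set.exists_max_image _ id (Set.toFinite _) ⟨_, hfirst⟩).imp fun _ hy => hy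

theorem card_retraction_eq_card_isBallot {A : ℕ → Prop} (hA : A 0) :
    Nat.card {μ : Fin m → Fin m // IsNoncrossingRetraction μ ∧ ∀ y, A #{x | μ x = y}} =
      Nat.card {a : Fin (m + 1) → ℕ // IsBallot a ∧ ∀ w, A (a w)} := by
  have forall_fiberCard (μ : Fin m → Fin m) :
      (∀ y, A #{x | μ x = y}) ↔ ∀ w, A (fiberCard μ w) := by
    simp only [Fin.forall_fin_succ', fiberCard_castSucc, fiberCard_last, hA, and_true]
  refine Nat.card_eq_of_bijective (fun μ => ⟨fiberCard μ.1,
    μ.2.1.isBallot_fiberCard, (forall_fiberCard _).1 μ.2.2⟩) ⟨?_, ?_⟩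
  · rintro ⟨μ, hμ, _⟩ ⟨ν, hν, _⟩ h
    have heq : fiberCard μ = fiberCard ν := congrArg Subtype.val h
    refine Subtype.ext (funext fun x => ?_)
    exact (hμ.isGreatest_sufficientStarts x).unique (heq ▸ hν.isGreatest_sufficientStarts x)
  · rintro ⟨a, ha, hAa⟩
    choose μ hμ using ha.exists_isGreatest
    have hfiber : fiberCard μ = a := fiberCard_eq_of_isGreatest hμ ha.sum_eq
    exact ⟨⟨μ, isNoncrossingRetraction_of_isGreatest hμ, (forall_fiberCard μ).2 (hfiber ▸ hAa)⟩,
      Subtype.ext hfiber⟩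

theorem succ_mul_card_noncrossing (m : ℕ) {A : ℕ → Prop} (hA : A 0) :
    (m + 1) * Nat.card {P : Finpartition (univ : Finset (Fin m)) //
        IsNoncrossing P ∧ ∀ S ∈ P.parts, A #S} =
      Nat.card {a : Fin (m + 1) → ℕ // ∑ w, a w = m ∧ ∀ w, A (a w)} := by
  rw [card_noncrossing_eq_card_retraction hA, card_retraction_eq_card_isBallot hA,
    succ_mul_card_isBallot]

end FiberCard

section CountingFunctions

variable {ι : Type*} [Fintype ι]

theorem card_fun_dvd_sum_eq {n : ℕ} (hn : 0 < n) (i : ℕ) :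
    Nat.card {a : ι → ℕ // ∑ w, a w = i * n ∧ ∀ w, n ∣ a w} =
      (Fintype.card ι).multichoose i := by
  classical
  rw [← Sym.card_sym_eq_multichoose ι i, ← Nat.card_eq_fintype_card,
    Nat.card_congr (Sym.equivNatSumOfFintype ι i)]
  symm
  refine Nat.card_eq_of_bijective (fun b => ⟨fun w => b.1 w * n,
    (sum_mul _ _ _).symm.trans (congrArg (· * n) b.2), fun w => dvd_mul_left n _⟩) ⟨?_, ?_⟩
  · intro b c h
    refine Subtype.ext (funext fun w => Nat.eq_of_mul_eq_mul_right hn ?_)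
    exact congrFun (congrArg Subtype.val h) w
  · rintro ⟨a, hsum, hdvd⟩
    choose b hb using fun w => exists_eq_mul_left_of_dvd (hdvd w)
    obtain rfl : a = fun w => b w * n := funext hb
    exact ⟨⟨b, Nat.eq_of_mul_eq_mul_right hn ((sum_mul _ _ _).trans hsum)⟩, rfl⟩

theorem card_fun_two_values_sum_eq {c : ℕ} (hc : 0 < c) (i : ℕ) :
    Nat.card {a : ι → ℕ // ∑ w, a w = i * c ∧ ∀ w, a w = 0 ∨ a w = c} =
      (Fintype.card ι).choose i := by
  classical
  have sum_indicator (s : Finset ι) : ∑ w, (if w ∈ s then c else 0) = #s * c := by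
    rw [sum_ite_mem, univ_inter, sum_const, smul_eq_mul]
  rw [← Fintype.card_finset_len, ← Nat.card_eq_fintype_card]
  symm
  refine Nat.card_eq_of_bijective (fun s => ⟨fun w => if w ∈ s.1 then c else 0,
    (sum_indicator s.1).trans (congrArg (· * c) s.2), fun w => (ite_eq_or_eq _ c 0).symm⟩) ⟨?_, ?_⟩
  · intro s t h
    ext w
    have := congrFun (congrArg Subtype.val h) w
    grind
  · rintro ⟨a, hsum, hvalues⟩
    have ha : (fun w => if w ∈ ({w | a w = c} : Finset ι) then c else 0) = a := by
      funext w
      have := hvalues w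
      grind
    refine ⟨⟨({w | a w = c} : Finset ι), Nat.eq_of_mul_eq_mul_right hc ?_⟩, Subtype.ext ha⟩
    rw [← sum_indicator, ha, hsum]

end CountingFunctions

section CyclicOrder

variable {m : ℕ}

theorem arcPos_eq_ite (p x : Fin m) :
    arcPos p x = if p ≤ x then (x - p : ℕ) else x + m - p := by
  have hp := p.isLt
  have hx := x.isLt
  split_ifs with h
  · rw [arcPos, Nat.sub_add_comm (Fin.le_def.1 h), Nat.add_mod_right, Nat.mod_eq_of_lt (by omega)]
  · rw [arcPos, Nat.mod_eq_of_lt (by omega)]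

theorem cycBtw_iff (p t q : Fin m) :
    CycBtw p t q ↔ p < t ∧ t < q ∨ t < q ∧ q < p ∨ q < p ∧ p < t := by
  rw [CycBtw, arcPos_eq_ite, arcPos_eq_ite]
  split_ifs <;> omega

open Classical in
theorem card_cycBtw_add_one {p q : Fin m} (hpq : p ≠ q) :
    #{t | CycBtw p t q} + 1 = arcPos p q := by
  simp only [cycBtw_iff]
  rw [arcPos_eq_ite]
  rcases hpq.lt_or_gt with hlt | hgt
  · have arc_eq : ({t | p < t ∧ t < q ∨ t < q ∧ q < p ∨ q < p ∧ p < t} : Finset (Fin m)) =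
        Ioo p q := by
      ext t
      rw [mem_filter_univ, mem_Ioo]
      omega
    rw [arc_eq, Fin.card_Ioo, if_pos hlt.le]
    omega
  · have arc_eq : ({t | p < t ∧ t < q ∨ t < q ∧ q < p ∨ q < p ∧ p < t} : Finset (Fin m)) =
        Iio q ∪ Ioi p := by
      ext t
      rw [mem_filter_univ, mem_union, mem_Iio, mem_Ioi]
      omega
    have arcs_disjoint : Disjoint (Iio q) (Ioi p) := by
      rw [disjoint_left]
      intro t ht
      rw [mem_Iio] at ht
      rw [mem_Ioi]
      omega
    rw [arc_eq, card_union_of_disjoint arcs_disjoint, Fin.card_Iio, Fin.card_Ioi,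
      if_neg hgt.not_ge]
    omega

theorem isNoncrossing_iff_not_crosses (P : Finpartition (univ : Finset (Fin m))) :
    IsNoncrossing P ↔ ∀ S ∈ P.parts, ∀ T ∈ P.parts, S ≠ T → ¬ Crosses S T := by
  constructor
  · rintro hP _ hS _ hT hne ⟨p, hp, q, hq, r, hr, s, hs, hprq, hqsp⟩
    rw [cycBtw_iff] at hprq hqsp
    rw [← P.part_eq_of_mem hS hp, ← P.part_eq_of_mem hT hr] at hne
    have hpq : P.part p = P.part q := by
      rw [P.part_eq_of_mem hS hp, P.part_eq_of_mem hS hq]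
    have hrs : P.part r = P.part s := by
      rw [P.part_eq_of_mem hT hr, P.part_eq_of_mem hT hs]
    have h₁ := @hP p r q s
    have h₂ := @hP s p r q
    have h₃ := @hP r q s p
    have h₄ := @hP q s p r
    grind
  · intro h a b c d hab hbc hcd hac hbd
    by_contra hne
    refine h _ (P.part_mem.2 (mem_univ a)) _ (P.part_mem.2 (mem_univ b)) hne
      ⟨a, P.mem_part (mem_univ a), c, hac ▸ P.mem_part (mem_univ c), b, P.mem_part (mem_univ b),
        d, hbd ▸ P.mem_part (mem_univ d), ?_, ?_⟩
    · rw [cycBtw_iff]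
      omega
    · rw [cycBtw_iff]
      omega

theorem natCast_arcPos {n : ℕ} (hnm : n ∣ m) (p q : Fin m) :
    (arcPos p q : ZMod n) = label n q - label n p := by
  have hm : (m : ZMod n) = 0 := (ZMod.natCast_eq_zero_iff m n).2 hnm
  rw [arcPos_eq_ite, label, label]
  split_ifs with h
  · rw [Nat.cast_sub h]
  · rw [Nat.cast_sub (by omega), Nat.cast_add, hm, add_zero]

end CyclicOrder

section Portrait

theorem dvd_card_of_part_subset {α : Type*} [Fintype α] [DecidableEq α] {n : ℕ}
    {P : Finpartition (univ : Finset α)} (hP : ∀ S ∈ P.parts, n ∣ #S) {s : Finset α}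
    (hs : ∀ x ∈ s, P.part x ⊆ s) : n ∣ #s := by
  rw [card_eq_sum_card_image P.part s]
  refine dvd_sum fun T hT => ?_
  obtain ⟨x, hx, rfl⟩ := mem_image.1 hT
  have fiber_eq : {y ∈ s | P.part y = P.part x} = P.part x := by
    ext y
    rw [mem_filter, ← P.mem_part_iff_part_eq_part (mem_univ y) (mem_univ x)]
    exact and_iff_right_of_imp fun hy => hs x hx hy
  rw [fiber_eq]
  exact hP _ (P.part_mem.2 (mem_univ x))

variable {m n : ℕ}

theorem IsNoncrossing.cycBtw_of_mem_part {P : Finpartition (univ : Finset (Fin m))}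
    (hP : IsNoncrossing P) {S : Finset (Fin m)} (hS : S ∈ P.parts) {p q r t : Fin m}
    (hpq : IsNext S p q) (hr : CycBtw p r q) (ht : t ∈ P.part r) : CycBtw p t q := by
  obtain ⟨hp, hq, hne, hgap⟩ := hpq
  have hT : P.part r ∈ P.parts := P.part_mem.2 (mem_univ r)
  have hST : S ≠ P.part r := by
    rintro rfl
    exact hgap r (P.mem_part (mem_univ r)) hr
  have hdisj : Disjoint S (P.part r) := P.disjoint hS hT hST
  have htp : p ≠ t := fun h => disjoint_left.1 hdisj hp (h ▸ ht)
  have htq : q ≠ t := fun h => disjoint_left.1 hdisj hq (h ▸ ht)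
  have no_link : ¬ CycBtw q t p := fun h =>
    (isNoncrossing_iff_not_crosses P).1 hP S hS _ hT hST
      ⟨p, hp, q, hq, r, P.mem_part (mem_univ r), t, ht, hr, h⟩
  rw [cycBtw_iff] at no_link ⊢
  omega

theorem IsNoncrossing.label_eq_of_isNext {P : Finpartition (univ : Finset (Fin m))}
    (hP : IsNoncrossing P) (hdvd : ∀ S ∈ P.parts, n ∣ #S) {S : Finset (Fin m)} (hS : S ∈ P.parts)
    {p q : Fin m} (hpq : IsNext S p q) : label n q = label n p + 1 := by
  classical
  have hm : n ∣ m := by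
    simpa using dvd_card_of_part_subset hdvd fun x (_ : x ∈ univ) => subset_univ (P.part x)
  have hgap : n ∣ #{t | CycBtw p t q} := by
    refine dvd_card_of_part_subset hdvd fun r hr t ht => ?_
    rw [mem_filter_univ] at hr ⊢
    exact hP.cycBtw_of_mem_part hS hpq hr ht
  have arc_eq_one : (arcPos p q : ZMod n) = 1 := by
    rw [← card_cycBtw_add_one hpq.2.2.1, Nat.cast_add_one, (ZMod.natCast_eq_zero_iff _ n).2 hgap,
      zero_add]
  rw [natCast_arcPos hm] at arc_eq_one
  rw [← arc_eq_one, add_sub_cancel]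

theorem isPortrait_parts_iff {i : ℕ} (hn : 2 ≤ n) (P : Finpartition (univ : Finset (Fin (i * n)))) :
    IsPortrait i n P.parts ↔ IsNoncrossing P ∧ ∀ S ∈ P.parts, n ∣ #S := by
  constructor
  · rintro ⟨hpolygon, hsep, -⟩
    exact ⟨(isNoncrossing_iff_not_crosses P).2 fun S hS T hT hne => (hsep S hS T hT hne).2,
      fun S hS => (hpolygon S hS).2.1⟩
  · rintro ⟨hP, hdvd⟩
    refine ⟨fun S hS => ⟨?_, hdvd S hS, fun p q => hP.label_eq_of_isNext hdvd hS⟩,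
      fun S hS T hT hne =>
        ⟨P.disjoint hS hT hne, (isNoncrossing_iff_not_crosses P).1 hP S hS T hT hne⟩,
      fun p => ⟨P.part p, P.part_mem.2 (mem_univ p), P.mem_part (mem_univ p)⟩⟩
    exact hn.trans (Nat.le_of_dvd (card_pos.2 (P.nonempty_of_mem_parts hS)) (hdvd S hS))

theorem IsPortrait.exists_parts_eq {i : ℕ} {PP : Finset (Finset (Fin (i * n)))}
    (h : IsPortrait i n PP) : ∃ P : Finpartition (univ : Finset (Fin (i * n))), P.parts = PP := by
  obtain ⟨hpolygon, hsep, hcover⟩ := h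
  refine ⟨Finpartition.ofExistsUnique PP (fun S _ => subset_univ S) (fun p _ => ?_) ?_, rfl⟩
  · obtain ⟨S, hS, hpS⟩ := hcover p
    refine ⟨S, ⟨hS, hpS⟩, fun T ⟨hT, hpT⟩ => ?_⟩
    by_contra hne
    exact disjoint_left.1 (hsep T hT S hS hne).1 hpT hpS
  · intro hempty
    simpa using (hpolygon _ hempty).1

theorem card_portrait_eq_card_noncrossing {i : ℕ} (hn : 2 ≤ n) (A : ℕ → Prop) :
    Nat.card {PP : Finset (Finset (Fin (i * n))) // IsPortrait i n PP ∧ ∀ S ∈ PP, A #S} =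
      Nat.card {P : Finpartition (univ : Finset (Fin (i * n))) //
        IsNoncrossing P ∧ ∀ S ∈ P.parts, n ∣ #S ∧ A #S} := by
  have parts_iff (P : Finpartition (univ : Finset (Fin (i * n)))) :
      (IsPortrait i n P.parts ∧ ∀ S ∈ P.parts, A #S) ↔
        IsNoncrossing P ∧ ∀ S ∈ P.parts, n ∣ #S ∧ A #S := by
    rw [isPortrait_parts_iff hn, and_assoc, forall₂_and]
  symm
  refine Nat.card_eq_of_bijective (fun P => ⟨P.1.parts, (parts_iff P.1).2 P.2⟩) ⟨?_, ?_⟩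
  · exact fun P Q h => Subtype.ext (Finpartition.ext (congrArg Subtype.val h))
  · rintro ⟨_, hPP⟩
    obtain ⟨P, rfl⟩ := hPP.1.exists_parts_eq
    exact ⟨⟨P, (parts_iff P).1 hPP⟩, rfl⟩

theorem succ_mul_card_portrait (i : ℕ) (hn : 2 ≤ n) :
    (i * n + 1) * Nat.card {PP : Finset (Finset (Fin (i * n))) // IsPortrait i n PP} =
      ((n + 1) * i).choose i := by
  have card_eq := card_portrait_eq_card_noncrossing (i := i) hn fun _ => True
  simp only [imp_true_iff, and_true] at card_eq
  rw [card_eq, succ_mul_card_noncrossing _ (dvd_zero n), card_fun_dvd_sum_eq (by omega),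
    Fintype.card_fin, Nat.multichoose_eq]
  congr 1
  rw [add_right_comm, Nat.add_sub_cancel]
  ring

theorem succ_mul_card_portrait_one_to_one (i : ℕ) (hn : 2 ≤ n) :
    (i * n + 1) * Nat.card {PP : Finset (Finset (Fin (i * n))) //
        IsPortrait i n PP ∧ ∀ S ∈ PP, #S = n} = (i * n + 1).choose i := by
  have card_iff (P : Finpartition (univ : Finset (Fin (i * n)))) :
      (∀ S ∈ P.parts, n ∣ #S ∧ #S = n) ↔ ∀ S ∈ P.parts, #S = 0 ∨ #S = n := by
    refine forall₂_congr fun S hS => ?_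
    have hpos : #S ≠ 0 := (card_pos.2 (P.nonempty_of_mem_parts hS)).ne'
    exact ⟨fun h => .inr h.2, fun h => ⟨(h.resolve_left hpos).symm.dvd, h.resolve_left hpos⟩⟩
  rw [card_portrait_eq_card_noncrossing hn (· = n)]
  simp only [card_iff]
  rw [succ_mul_card_noncrossing (i * n) (A := fun b => b = 0 ∨ b = n) (.inl rfl),
    card_fun_two_values_sum_eq (by omega), Fintype.card_fin]

theorem succ_mul_card_portrait_one_to_one_succ (i : ℕ) (hn : 1 ≤ n) :
    (i * n + 1) * Nat.card {QQ : Finset (Finset (Fin (i * (n + 1)))) //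
        IsPortrait i (n + 1) QQ ∧ ∀ S ∈ QQ, #S = n + 1} = ((n + 1) * i).choose i := by
  have hsub : i * (n + 1) + 1 - i = i * n + 1 := Nat.sub_eq_of_eq_add (by ring)
  refine Nat.eq_of_mul_eq_mul_left (Nat.succ_pos (i * (n + 1))) ?_
  rw [mul_left_comm, succ_mul_card_portrait_one_to_one i (by omega), mul_comm (n + 1) i,
    mul_comm _ (Nat.choose (i * (n + 1)) i), Nat.choose_mul_succ_eq, hsub, mul_comm]

end Portrait

/-- The total number `F(i,n)` of sibling portraits of an `n`-gon in a
round gap of degree `i` (allowing polygons of any degree) equals the number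
`f(i,n+1)` of one-to-one sibling portraits of an `(n+1)`-gon in a round gap of
degree `i`, which is the Fuss–Catalan number `((n+1)*i).choose i / (n*i + 1)`. -/
theorem card_all_portraits (i n : ℕ) (hi : 1 ≤ i) (hn : 2 ≤ n) :
    Nat.card {PP : Finset (Finset (Fin (i * n))) // IsPortrait i n PP} =
      Nat.card {QQ : Finset (Finset (Fin (i * (n + 1)))) //
        IsPortrait i (n + 1) QQ ∧ ∀ S ∈ QQ, S.card = n + 1} ∧
    Nat.card {PP : Finset (Finset (Fin (i * n))) // IsPortrait i n PP} =
      ((n + 1) * i).choose i / (n * i + 1) := by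
  have all_degrees := succ_mul_card_portrait i hn
  have one_to_one := succ_mul_card_portrait_one_to_one_succ i (n := n) (by omega)
  have hpos : 0 < i * n + 1 := Nat.succ_pos _
  refine ⟨Nat.eq_of_mul_eq_mul_left hpos (all_degrees.trans one_to_one.symm), ?_⟩
  rw [mul_comm n i, ← all_degrees, Nat.mul_div_cancel_left _ hpos]
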